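/- (Theorem 3.1, local ergodic theorem in equilibrium form) For every jump rate c, every Γ-invariant local function bundle f: V×Z → ℝ, and every constant C > 0, it holds that lim_{i→∞} limsup_{ε→0} limsup_{m→∞} sup_{μ ∈ P_{m,C}} E_μ | f̄_{o,i} − ⟨f_o⟩( η̄_{o, b(ε√t_m)} ) | = 0. -/

import Mathlib

open Filter Pointwise

namespace Tower

variable {Γ : Type} [Group Γ] [DecidableEq Γ]

/-- The ball of radius `n` about the identity in the Cayley graph of `(Γ, S)`, as a `Finset`:
products of at most `n` elements of `S`. -/
def ballF (S : Finset Γ) : ℕ → Finset Γ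
  | 0 => {1}
  | n + 1 => ballF S n ∪ ballF S n * S

lemma one_mem_ballF (S : Finset Γ) (n : ℕ) : (1 : Γ) ∈ ballF S n := by
  induction n with
  | zero => simp [ballF]
  | succ n ih => exact Finset.mem_union_left _ ih

/-- The word norm of `x` with respect to `S`. -/
noncomputable def wordNorm (S : Finset Γ) (x : Γ) : ℕ := sInf {n | x ∈ ballF S n}

/-- `(F i)` is a Følner sequence for `(Γ, S)`. -/
def IsFolner (S : Finset Γ) (F : ℕ → Finset Γ) : Prop :=
  (∀ i, (F i).Nonempty) ∧
    Tendsto (fun i => (((F i * S) \ F i).card : ℝ) / (F i).card) atTop (nhds 0)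

/-- `b(K)`: the largest `i` such that `F i` is contained in the ball of radius `K` about `o`. -/
noncomputable def bFol (S : Finset Γ) (F : ℕ → Finset Γ) (K : ℝ) : ℕ :=
  sSup {i | ∀ x ∈ F i, (wordNorm S x : ℝ) ≤ K}

/-- Exchange the values of a configuration at two coordinates. -/
def exch {α : Type} [DecidableEq α] (x y : α) (η : α → Bool) : α → Bool :=
  fun z => if z = x then η y else if z = y then η x else η z

/-- Exchange of values at two coordinates, on configurations restricted to a `Finset`. -/
def exchOn {α : Type} [DecidableEq α] (A : Finset α) (x y : α)
    (ζ : {a // a ∈ A} → Bool) : {a // a ∈ A} → Bool :=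
  fun z => if (z : α) = x then (if h : y ∈ A then ζ ⟨y, h⟩ else ζ z)
    else if (z : α) = y then (if h : x ∈ A then ζ ⟨x, h⟩ else ζ z) else ζ z

/-- The type of generators. -/
abbrev Gen (S : Finset Γ) : Type _ := {s : Γ // s ∈ S}

/-- A `Γ`-invariant local function bundle for vertices `f : V × Z → ℝ` on the Cayley graph
`X = (V, E)` of `(Γ, S)`, `V = Γ`, `Z = {0,1}^V`. -/
structure LocalBundleV (S : Finset Γ) : Type _ where
  f : Γ → (Γ → Bool) → ℝ
  r : ℕ
  localized : ∀ (x : Γ) (η η' : Γ → Bool),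
    (∀ z ∈ (ballF S r).image (x * ·), η z = η' z) → f x η = f x η'
  invariant : ∀ (σ x : Γ) (η : Γ → Bool), f (σ * x) (fun z => η (σ⁻¹ * z)) = f x η

/-- A jump rate: a symmetric, non-degenerate `Γ`-invariant local function bundle for edges,
an edge being encoded as a pair `(x, s) : Γ × Gen S` with origin `x` and terminus `x * s`. -/
structure JumpRate (S : Finset Γ) : Type _ where
  c : Γ → Gen S → (Γ → Bool) → ℝ
  c₀ : ℝ
  c₀_pos : 0 < c₀
  nondeg : ∀ x s η, c₀ ≤ c x s η
  r : ℕ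
  localized : ∀ (x : Γ) (s : Gen S) (η η' : Γ → Bool),
    (∀ z ∈ (ballF S r).image (x * ·) ∪ (ballF S r).image (x * (s : Γ) * ·), η z = η' z) →
      c x s η = c x s η'
  invariant : ∀ (σ x : Γ) (s : Gen S) (η : Γ → Bool),
    c (σ * x) s (fun z => η (σ⁻¹ * z)) = c x s η
  symm_rev : ∀ (x : Γ) (s : Gen S) (h : (s : Γ)⁻¹ ∈ S) (η : Γ → Bool),
    c (x * (s : Γ)) ⟨(s : Γ)⁻¹, h⟩ η = c x s η
  symm_exch : ∀ (x : Γ) (s : Gen S) (η : Γ → Bool),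
    c x s (exch x (x * (s : Γ)) η) = c x s η

/-- `ρ`-Bernoulli weight on `{0,1}`. -/
def bw (ρ : ℝ) (b : Bool) : ℝ := if b then ρ else 1 - ρ

/-- Expectation with respect to the `ρ`-Bernoulli product measure `ν_ρ` of a cylinder function
depending only on the coordinates in the finite set `A`. -/
noncomputable def expCyl (ρ : ℝ) (A : Finset Γ) (g : (Γ → Bool) → ℝ) : ℝ :=
  ∑ ζ : ({a // a ∈ A} → Bool),
    (∏ a : {a // a ∈ A}, bw ρ (ζ a)) *
      g (fun z => if h : z ∈ A then ζ ⟨z, h⟩ else false)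

/-- The global average `⟨f_o⟩(ρ) = E_{ν_ρ}[f_o]`. -/
noncomputable def globalAvg {S : Finset Γ} (f : LocalBundleV S) (ρ : ℝ) : ℝ :=
  expCyl ρ (ballF S f.r) (f.f 1)

section Quot

variable (N : Subgroup Γ)

/-- The configuration space `Z_m = {0,1}^{V_m}` over the quotient graph `X_m = Γ_m \ X`. -/
abbrev Conf (N : Subgroup Γ) : Type _ := (Γ ⧸ N) → Bool

/-- The `Γ_m`-periodic extension of a configuration on `X_m` to `X`. -/
def liftZ (η : Conf N) : Γ → Bool := fun x => η (QuotientGroup.mk x)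

/-- The function on `V_m × Z_m` induced by a local function bundle. -/
noncomputable def fQ {S : Finset Γ} (f : LocalBundleV S) (v : Γ ⧸ N) (η : Conf N) : ℝ :=
  f.f (Quotient.out v) (liftZ N η)

/-- The jump rate induced on the quotient graph, on the edge `(v, v * s)`. -/
noncomputable def cQ {S : Finset Γ} (c : JumpRate S) (v : Γ ⧸ N) (s : Gen S) (η : Conf N) : ℝ :=
  c.c (Quotient.out v) s (liftZ N η)

variable [N.Normal]

/-- `η^e` on the quotient, for the edge `e = (v, v * s)`. -/
def exchQ [DecidableEq (Γ ⧸ N)] (v : Γ ⧸ N) (s : Γ) (η : Conf N) : Conf N :=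
  exch v (v * QuotientGroup.mk s) η

/-- The graph distance on the quotient graph `X_m`. -/
noncomputable def distQ (S : Finset Γ) (v w : Γ ⧸ N) : ℕ :=
  sInf {n | ∃ x ∈ ballF S n, v * QuotientGroup.mk x = w}

/-- The diameter of the quotient graph `X_m`. -/
noncomputable def diamQ (S : Finset Γ) : ℕ :=
  sSup {k | ∃ v w : Γ ⧸ N, distQ N S v w = k}

variable [Fintype (Γ ⧸ N)] [DecidableEq (Γ ⧸ N)]

/-- `μ` is a probability measure on the finite configuration space `Z_m`. -/
def IsProb (μ : Conf N → ℝ) : Prop := (∀ η, 0 ≤ μ η) ∧ ∑ η, μ η = 1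

/-- The action of `Γ/Γ_m` on `Z_m`. -/
def actQ (σ : Γ ⧸ N) (η : Conf N) : Conf N := fun z => η (σ⁻¹ * z)

/-- `μ` is `Γ/Γ_m`-invariant. -/
def IsInvariant (μ : Conf N → ℝ) : Prop := ∀ σ η, μ (actQ N σ η) = μ η

/-- The uniform ((1/2)-Bernoulli) measure `ν_m` on `Z_m`. -/
noncomputable def nuU : Conf N → ℝ := fun _ => (Fintype.card (Conf N) : ℝ)⁻¹

/-- The density `φ = dμ/dν_m`. -/
noncomputable def dens (μ : Conf N → ℝ) : Conf N → ℝ :=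
  fun η => (Fintype.card (Conf N) : ℝ) * μ η

/-- `√φ` where `φ = dμ/dν_m`. -/
noncomputable def sqrtDens (μ : Conf N → ℝ) : Conf N → ℝ :=
  fun η => Real.sqrt (dens N μ η)

/-- Expectation with respect to a probability measure on `Z_m`. -/
noncomputable def Emeas (μ : Conf N → ℝ) (g : Conf N → ℝ) : ℝ := ∑ η, μ η * g η

/-- The generator `L_m F (η) = Σ_{e ∈ E_m} c(e,η) (F(η^e) - F(η))`. -/
noncomputable def Lgen {S : Finset Γ} (c : JumpRate S) (F : Conf N → ℝ) (η : Conf N) : ℝ :=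
  ∑ e : (Γ ⧸ N) × Gen S, cQ N c e.1 e.2 η * (F (exchQ N e.1 (e.2 : Γ) η) - F η)

/-- The Dirichlet form `I_m(μ) = -∫ √φ L_m √φ dν_m`. -/
noncomputable def ImGen {S : Finset Γ} (c : JumpRate S) (μ : Conf N → ℝ) : ℝ :=
  - ∑ η, nuU N η * (sqrtDens N μ η * Lgen N c (sqrtDens N μ) η)

/-- The Dirichlet form in sum form:
`I_m(μ) = (1/2) Σ_{e ∈ E_m} ∫ c(e,η) (π_e √φ)² dν_m`. -/
noncomputable def ImSum {S : Finset Γ} (c : JumpRate S) (μ : Conf N → ℝ) : ℝ :=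
  (1 / 2) * ∑ e : (Γ ⧸ N) × Gen S, ∑ η, nuU N η *
    (cQ N c e.1 e.2 η * (sqrtDens N μ (exchQ N e.1 (e.2 : Γ) η) - sqrtDens N μ η) ^ 2)

/-- The local average `f̄_{v,i}` on the quotient, over the Følner set `Fi`. -/
noncomputable def fbarQ {S : Finset Γ} (f : LocalBundleV S) (Fi : Finset Γ) (v : Γ ⧸ N)
    (η : Conf N) : ℝ :=
  ((Fi.card : ℝ))⁻¹ * ∑ σ ∈ Fi, fQ N f (QuotientGroup.mk σ * v) η

/-- The local particle density `η̄_{v,i}` on the quotient, over the Følner set `Fi`. -/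
noncomputable def etabarQ (Fi : Finset Γ) (v : Γ ⧸ N) (η : Conf N) : ℝ :=
  ((Fi.card : ℝ))⁻¹ * ∑ σ ∈ Fi, (if η (QuotientGroup.mk σ * v) then (1 : ℝ) else 0)

/-- The image of `E⁰ = {e ∈ E : oe = o or te = o}` in `E_m`. -/
def E0Q (S : Finset Γ) : Finset ((Γ ⧸ N) × Gen S) :=
  Finset.univ.filter fun e => e.1 = 1 ∨ e.1 * QuotientGroup.mk (e.2 : Γ) = 1

/-- The marginal `μ|_Λ` on `Z_Λ = {0,1}^A` of a measure on `Z_m` (identified with its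
`Γ_m`-periodic extension). -/
noncomputable def marg (A : Finset Γ) (μ : Conf N → ℝ) (ζ : {a // a ∈ A} → Bool) : ℝ :=
  ∑ η : Conf N, if (∀ a : {a // a ∈ A}, liftZ N η (a : Γ) = ζ a) then μ η else 0

/-- The density `φ_Λ = d(μ|_Λ)/dν_Λ`. -/
noncomputable def margDens (A : Finset Γ) (μ : Conf N → ℝ) (ζ : {a // a ∈ A} → Bool) : ℝ :=
  (Fintype.card ({a // a ∈ A} → Bool) : ℝ) * marg N A μ ζ

/-- The restricted Dirichlet form
`I°_Λ(μ) = (1/2) Σ_{e ∈ E_Λ} ∫_{Z_Λ} (π_e √φ_Λ)² dν_Λ` for the subgraph `Λ = (A, Eset)`. -/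
noncomputable def IrestV {S : Finset Γ} (A : Finset Γ) (Eset : Finset (Γ × Gen S))
    (μ : Conf N → ℝ) : ℝ :=
  (1 / 2) * ∑ e ∈ Eset, ∑ ζ : ({a // a ∈ A} → Bool),
    (Fintype.card ({a // a ∈ A} → Bool) : ℝ)⁻¹ *
      (Real.sqrt (margDens N A μ (exchOn A e.1 (e.1 * (e.2 : Γ)) ζ)) -
        Real.sqrt (margDens N A μ ζ)) ^ 2

/-- The marginal on `Z_Λ × Z_Λ` of the pushforward `σ̂μ` of `μ` under `η ↦ (η, σ⁻¹η)`. -/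
noncomputable def margTwo (σ : Γ) (A : Finset Γ) (μ : Conf N → ℝ)
    (ζ ζ' : {a // a ∈ A} → Bool) : ℝ :=
  ∑ η : Conf N,
    if ((∀ a : {a // a ∈ A}, liftZ N η (a : Γ) = ζ a) ∧
        (∀ a : {a // a ∈ A}, liftZ N η (σ * (a : Γ)) = ζ' a)) then μ η else 0

/-- The density of `(σ̂μ)|_{Λ×Λ}` with respect to `ν_Λ ⊗ ν_Λ`. -/
noncomputable def margTwoDens (σ : Γ) (A : Finset Γ) (μ : Conf N → ℝ)
    (ζ ζ' : {a // a ∈ A} → Bool) : ℝ :=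
  ((Fintype.card ({a // a ∈ A} → Bool) : ℝ)) ^ 2 * margTwo N σ A μ ζ ζ'

/-- `I^{(o,o)}_{Λ×Λ}(σ̂μ) = (1/2) ∫ (π̃_{o,o} √(d(σ̂μ)|_{Λ×Λ}/d(ν_Λ⊗ν_Λ)))² d(ν_Λ⊗ν_Λ)`. -/
noncomputable def Ioo (σ : Γ) (A : Finset Γ) (h1 : (1 : Γ) ∈ A) (μ : Conf N → ℝ) : ℝ :=
  (1 / 2) * ∑ ζ : ({a // a ∈ A} → Bool), ∑ ζ' : ({a // a ∈ A} → Bool),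
    (((Fintype.card ({a // a ∈ A} → Bool) : ℝ)) ^ 2)⁻¹ *
      (Real.sqrt (margTwoDens N σ A μ (Function.update ζ ⟨1, h1⟩ (ζ' ⟨1, h1⟩))
          (Function.update ζ' ⟨1, h1⟩ (ζ ⟨1, h1⟩))) -
        Real.sqrt (margTwoDens N σ A μ ζ ζ')) ^ 2

/-- The two-block restricted Dirichlet form `I°_{Λ×Λ}(σ̂μ)`, i.e. the Dirichlet form of
`L°_Λ ⊗ 1 + 1 ⊗ L°_Λ` of the square root of the density of `(σ̂μ)|_{Λ×Λ}`. -/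
noncomputable def ItwoRest {S : Finset Γ} (σ : Γ) (A : Finset Γ) (Eset : Finset (Γ × Gen S))
    (μ : Conf N → ℝ) : ℝ :=
  (1 / 2) * ∑ e ∈ Eset, ∑ ζ : ({a // a ∈ A} → Bool), ∑ ζ' : ({a // a ∈ A} → Bool),
    (((Fintype.card ({a // a ∈ A} → Bool) : ℝ)) ^ 2)⁻¹ *
      ((Real.sqrt (margTwoDens N σ A μ (exchOn A e.1 (e.1 * (e.2 : Γ)) ζ) ζ') -
          Real.sqrt (margTwoDens N σ A μ ζ ζ')) ^ 2 +
        (Real.sqrt (margTwoDens N σ A μ ζ (exchOn A e.1 (e.1 * (e.2 : Γ)) ζ')) -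
          Real.sqrt (margTwoDens N σ A μ ζ ζ')) ^ 2)

end Quot

/-- The edge set `E_Λ` of the subgraph `Λ` spanned by the ball of radius `K`. -/
def ELam (S : Finset Γ) (K : ℕ) : Finset (Γ × Gen S) :=
  (ballF S K ×ˢ (Finset.univ : Finset (Gen S))).filter fun e => e.1 * (e.2 : Γ) ∈ ballF S K

section Abstract

set_option linter.unusedSectionVars false

/-- Failure of invariance of `μ` under a permutation of the sites, in `ℓ¹`. -/
noncomputable def del {V : Type} [Fintype V] [DecidableEq V] (μ : (V → Bool) → ℝ)
    (g : Equiv.Perm V) : ℝ := ∑ η : V → Bool, |μ (fun z => η (g z)) - μ η|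

/-- Indicator that all sites of `A` are occupied. -/
noncomputable def chi {V : Type} (A : Finset V) (η : V → Bool) : ℝ :=
  ∏ a ∈ A, (if η a then (1 : ℝ) else 0)

lemma chi_nonneg {V : Type} (A : Finset V) (η : V → Bool) : 0 ≤ chi A η :=
  Finset.prod_nonneg fun a _ => by split_ifs <;> norm_num

lemma chi_le_one {V : Type} (A : Finset V) (η : V → Bool) : chi A η ≤ 1 :=
  Finset.prod_le_one (fun a _ => by split_ifs <;> norm_num)
    (fun a _ => by split_ifs <;> norm_num)

lemma chi_union {V : Type} [DecidableEq V] (A B : Finset V) (η : V → Bool) :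
    chi (A ∪ B) η = chi A η * chi B η := by
  have key : ∀ A : Finset V, chi A η = if (∀ a ∈ A, η a = true) then 1 else 0 := by
    intro A
    unfold chi
    split_ifs with h
    · exact Finset.prod_eq_one fun a ha => by simp [h a ha]
    · push Not at h
      obtain ⟨a, ha, h⟩ := h
      exact Finset.prod_eq_zero ha (by simp [h])
  rw [key, key, key]
  by_cases h1 : ∀ a ∈ A, η a = true <;> by_cases h2 : ∀ a ∈ B, η a = true
  · have : ∀ a ∈ A ∪ B, η a = true := by
      intro a ha
      rcases Finset.mem_union.1 ha with h | h
      · exact h1 a h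
      · exact h2 a h
    simp only [if_pos h1, if_pos h2, if_pos this, mul_one]
  · have : ¬ ∀ a ∈ A ∪ B, η a = true := fun h => h2 fun a ha => h a (Finset.mem_union_right _ ha)
    simp only [if_neg h2, if_neg this, mul_zero]
  · have : ¬ ∀ a ∈ A ∪ B, η a = true := fun h => h1 fun a ha => h a (Finset.mem_union_left _ ha)
    simp only [if_neg h1, if_neg this, zero_mul]
  · have : ¬ ∀ a ∈ A ∪ B, η a = true := fun h => h1 fun a ha => h a (Finset.mem_union_left _ ha)
    simp only [if_neg h1, if_neg this, zero_mul]

variable {V : Type} [Fintype V] [DecidableEq V] (μ : (V → Bool) → ℝ)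

/-- Relabelling of configurations. -/
def permConf (g : Equiv.Perm V) : (V → Bool) ≃ (V → Bool) := Equiv.arrowCongr g⁻¹ (Equiv.refl _)

lemma permConf_apply (g : Equiv.Perm V) (η : V → Bool) : permConf g η = fun z => η (g z) := rfl

lemma del_nonneg (g : Equiv.Perm V) : 0 ≤ del μ g := Finset.sum_nonneg fun _ _ => abs_nonneg _

lemma del_one : del μ 1 = 0 := by simp [del]

lemma del_mul (g h : Equiv.Perm V) : del μ (g * h) ≤ del μ g + del μ h := by
  have h1 : del μ h = ∑ η : V → Bool, |μ (fun z => η (g (h z))) - μ (fun z => η (g z))| := by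
    unfold del
    exact (Equiv.sum_comp (permConf g) (fun η => |μ (fun z => η (h z)) - μ η|)).symm
  rw [h1]
  unfold del
  rw [← Finset.sum_add_distrib]
  refine Finset.sum_le_sum fun η _ => ?_
  have := abs_sub_le (μ (fun z => η (g (h z)))) (μ (fun z => η (g z))) (μ η)
  simp only [Equiv.Perm.mul_apply]
  linarith

lemma del_swap_tri (x y z : V) {p q : ℝ} (hp : del μ (Equiv.swap x y) ≤ p)
    (hq : del μ (Equiv.swap y z) ≤ q) : del μ (Equiv.swap x z) ≤ p + 2 * q := by
  have p0 := (del_nonneg μ _).trans hp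
  have q0 := (del_nonneg μ _).trans hq
  by_cases hxz : x = z
  · subst hxz
    rw [Equiv.swap_self]
    have : del μ (Equiv.refl V) = 0 := del_one μ
    linarith
  by_cases hxy : x = y
  · subst hxy; linarith
  rw [Equiv.swap_comm x z, ← Equiv.swap_mul_swap_mul_swap hxy hxz]
  have h1 := del_mul μ (Equiv.swap y z * Equiv.swap x y) (Equiv.swap y z)
  have h2 := del_mul μ (Equiv.swap y z) (Equiv.swap x y)
  linarith

/-- Expectation. -/
noncomputable def Ex (g : (V → Bool) → ℝ) : ℝ := ∑ η, μ η * g η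

lemma Ex_perm (g : (V → Bool) → ℝ) (h0 : ∀ η, 0 ≤ g η) (h1 : ∀ η, g η ≤ 1) (s : Equiv.Perm V) :
    |Ex μ (fun η => g (fun z => η (s z))) - Ex μ g| ≤ del μ s⁻¹ := by
  have e1 : Ex μ (fun η => g (fun z => η (s z)))
      = ∑ η, μ (fun z => η (s⁻¹ z)) * g η := by
    unfold Ex
    rw [← Equiv.sum_comp (permConf s⁻¹)]
    refine Finset.sum_congr rfl fun η _ => ?_
    simp [permConf_apply]
  rw [e1]
  unfold Ex del
  rw [← Finset.sum_sub_distrib]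
  refine (Finset.abs_sum_le_sum_abs _ _).trans (Finset.sum_le_sum fun η _ => ?_)
  rw [← sub_mul, abs_mul, abs_of_nonneg (h0 η)]
  exact mul_le_of_le_one_right (abs_nonneg _) (h1 η)

lemma chi_swap_step (A : Finset V) (a b : V) (ha : a ∈ A) (hb : b ∉ A) :
    |Ex μ (chi (insert b (A.erase a))) - Ex μ (chi A)| ≤ del μ (Equiv.swap a b) := by
  have h := Ex_perm μ (chi A) (chi_nonneg A) (chi_le_one A) (Equiv.swap a b)
  rw [Equiv.swap_inv] at h
  convert h using 4
  ext η
  have hne : b ∉ A.erase a := fun h => hb (Finset.mem_of_mem_erase h)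
  unfold chi
  rw [Finset.prod_insert hne, ← Finset.mul_prod_erase A _ ha]
  beta_reduce
  rw [Equiv.swap_apply_left]
  congr 1
  refine Finset.prod_congr rfl fun x hx => ?_
  rw [Equiv.swap_apply_of_ne_of_ne (Finset.ne_of_mem_erase hx)
    (fun h => hb (by rw [← h]; exact Finset.mem_of_mem_erase hx))]

lemma chi_compare (G : Set V) (D : ℝ) (hG : ∀ a ∈ G, ∀ b ∈ G, del μ (Equiv.swap a b) ≤ D)
    (n : ℕ) : ∀ A B : Finset V, (↑A ⊆ G) → (↑B ⊆ G) → A.card = B.card → (A \ B).card = n →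
    |Ex μ (chi A) - Ex μ (chi B)| ≤ n * D := by
  induction n with
  | zero =>
    intro A B _ _ hc h
    have h1 : A ⊆ B := Finset.sdiff_eq_empty_iff_subset.1 (Finset.card_eq_zero.1 h)
    have : A = B := Finset.eq_of_subset_of_card_le h1 hc.ge
    simp [this]
  | succ n ih =>
    intro A B hA hB hc h
    have h2 : (B \ A).card = n + 1 := by rw [← h]; exact (Finset.card_sdiff_comm hc).symm
    obtain ⟨a, ha⟩ := Finset.card_pos.1 (show 0 < (A \ B).card by omega)
    obtain ⟨b, hb⟩ := Finset.card_pos.1 (show 0 < (B \ A).card by omega)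
    rw [Finset.mem_sdiff] at ha hb
    have hne : b ∉ A.erase a := fun h => hb.2 (Finset.mem_of_mem_erase h)
    have s1 := chi_swap_step μ A a b ha.1 hb.2
    have s2 := ih (insert b (A.erase a)) B ?_ hB ?_ ?_
    · have s3 := hG a (hA ha.1) b (hB hb.1)
      rw [abs_sub_comm] at s1
      have := abs_sub_le (Ex μ (chi A)) (Ex μ (chi (insert b (A.erase a)))) (Ex μ (chi B))
      push_cast
      linarith
    · intro x hx
      rcases Finset.mem_insert.1 (Finset.mem_coe.1 hx) with h | h
      · exact h ▸ hB hb.1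
      · exact hA (Finset.mem_of_mem_erase h)
    · rw [Finset.card_insert_of_notMem hne, Finset.card_erase_of_mem ha.1, ← hc]
      have := Finset.card_pos.2 ⟨a, ha.1⟩
      omega
    · have : insert b (A.erase a) \ B = (A \ B).erase a := by
        ext x; simp only [Finset.mem_sdiff, Finset.mem_insert, Finset.mem_erase]
        constructor
        · rintro ⟨h | h, h'⟩
          · exact absurd (h ▸ hb.1) h'
          · exact ⟨h.1, h.2, h'⟩
        · rintro ⟨h1, h2, h3⟩
          exact ⟨Or.inr ⟨h1, h2⟩, h3⟩
      rw [this, Finset.card_erase_of_mem (Finset.mem_sdiff.2 ha), h]; rfl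

lemma exists_M (G : Set V) (D : ℝ) (hD : 0 ≤ D)
    (hG : ∀ a ∈ G, ∀ b ∈ G, del μ (Equiv.swap a b) ≤ D)
    (hμ : ∀ η, 0 ≤ μ η) (hμ1 : ∑ η, μ η = 1) (n : ℕ) :
    ∃ M : ℝ, 0 ≤ M ∧ M ≤ 1 ∧ ∀ A : Finset V, (↑A ⊆ G) → A.card = n →
      |Ex μ (chi A) - M| ≤ n * D := by
  by_cases h : ∃ B : Finset V, (↑B ⊆ G) ∧ B.card = n
  · obtain ⟨B, hB, hn⟩ := h
    refine ⟨Ex μ (chi B), Finset.sum_nonneg fun η _ => mul_nonneg (hμ η) (chi_nonneg B η), ?_, ?_⟩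
    · rw [← hμ1]
      exact Finset.sum_le_sum fun η _ => mul_le_of_le_one_right (hμ η) (chi_le_one B η)
    · intro A hA hAn
      refine (chi_compare μ G D hG _ A B hA hB (hAn.trans hn.symm) rfl).trans ?_
      refine mul_le_mul_of_nonneg_right ?_ hD
      exact_mod_cast (Finset.card_le_card Finset.sdiff_subset).trans hAn.le
  · exact ⟨0, le_rfl, zero_le_one, fun A hA hAn => absurd ⟨A, hA, hAn⟩ h⟩

lemma avg_lemma {ι : Type} (T : Finset ι) (hT : T.Nonempty) (x : ι → ℝ) (bad : ι → Prop)
    [DecidablePred bad] (M e γ : ℝ) (hx : ∀ τ ∈ T, ¬ bad τ → |x τ - M| ≤ e)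
    (he : 0 ≤ e) (hx1 : ∀ τ ∈ T, |x τ - M| ≤ 1)
    (hb : ((T.filter bad).card : ℝ) ≤ γ * T.card) :
    |(T.card : ℝ)⁻¹ * ∑ τ ∈ T, x τ - M| ≤ e + γ := by
  have hc : (0 : ℝ) < T.card := by exact_mod_cast hT.card_pos
  have e1 : (T.card : ℝ)⁻¹ * ∑ τ ∈ T, x τ - M = (T.card : ℝ)⁻¹ * ∑ τ ∈ T, (x τ - M) := by
    rw [Finset.sum_sub_distrib, Finset.sum_const, nsmul_eq_mul]
    field_simp
  rw [e1, abs_mul, abs_of_nonneg (inv_nonneg.2 hc.le), inv_mul_le_iff₀ hc]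
  calc |∑ τ ∈ T, (x τ - M)| ≤ ∑ τ ∈ T, |x τ - M| := Finset.abs_sum_le_sum_abs _ _
    _ ≤ ∑ τ ∈ T, (e + if bad τ then 1 else 0) := by
        refine Finset.sum_le_sum fun τ hτ => ?_
        split_ifs with h
        · linarith [hx1 τ hτ]
        · linarith [hx τ hτ h]
    _ = T.card * e + (T.filter bad).card := by
        rw [Finset.sum_add_distrib, Finset.sum_const, nsmul_eq_mul, Finset.sum_boole]
    _ ≤ T.card * (e + γ) := by linarith

/-- Empirical density along a family of sites. -/
noncomputable def rho {ι : Type} (T : Finset ι) (p : ι → V) (η : V → Bool) : ℝ :=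
  (T.card : ℝ)⁻¹ * ∑ τ ∈ T, (if η (p τ) then (1 : ℝ) else 0)

lemma rho_nonneg {ι : Type} (T : Finset ι) (p : ι → V) (η : V → Bool) : 0 ≤ rho T p η :=
  mul_nonneg (by positivity) (Finset.sum_nonneg fun a _ => by split_ifs <;> norm_num)

lemma rho_le_one {ι : Type} (T : Finset ι) (p : ι → V) (η : V → Bool) : rho T p η ≤ 1 := by
  unfold rho
  have : ∑ τ ∈ T, (if η (p τ) then (1 : ℝ) else 0) ≤ T.card := by
    rw [Finset.sum_boole]; exact_mod_cast Finset.card_filter_le _ _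
  calc (T.card : ℝ)⁻¹ * ∑ τ ∈ T, (if η (p τ) then (1 : ℝ) else 0)
      ≤ (T.card : ℝ)⁻¹ * T.card := by gcongr
    _ ≤ 1 := inv_mul_le_one

lemma Ex_unit (hμ : ∀ η, 0 ≤ μ η) (hμ1 : ∑ η, μ η = 1) (g : (V → Bool) → ℝ)
    (h0 : ∀ η, 0 ≤ g η) (h1 : ∀ η, g η ≤ 1) : 0 ≤ Ex μ g ∧ Ex μ g ≤ 1 := by
  refine ⟨Finset.sum_nonneg fun η _ => mul_nonneg (hμ η) (h0 η), ?_⟩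
  rw [← hμ1]
  exact Finset.sum_le_sum fun η _ => mul_le_of_le_one_right (hμ η) (h1 η)

lemma Ex_avg {ι : Type} (T : Finset ι) (k : ℝ) (g : ι → (V → Bool) → ℝ) :
    Ex μ (fun η => k * ∑ τ ∈ T, g τ η) = k * ∑ τ ∈ T, Ex μ (g τ) := by
  unfold Ex
  rw [Finset.sum_comm, Finset.mul_sum]
  refine Finset.sum_congr rfl fun η _ => ?_
  rw [← Finset.mul_sum]; ring

lemma rho_moment {ι : Type} (T : Finset ι) (hT : T.Nonempty) (p : ι → V) (β : ℝ)
    (hβ : ∀ v, ((T.filter fun τ => p τ = v).card : ℝ) ≤ β * T.card)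
    (G : Set V) (hpG : ∀ τ ∈ T, p τ ∈ G) (D : ℝ) (hD : 0 ≤ D)
    (hμ : ∀ η, 0 ≤ μ η) (hμ1 : ∑ η, μ η = 1) (n : ℕ) (M : ℝ) (hM0 : 0 ≤ M) (hM1 : M ≤ 1)
    (hM : ∀ A : Finset V, (↑A ⊆ G) → A.card = n → |Ex μ (chi A) - M| ≤ n * D) (j : ℕ) :
    ∀ A : Finset V, (↑A ⊆ G) → A.card + j = n →
      |Ex μ (fun η => chi A η * rho T p η ^ j) - M| ≤ n * D + j * (n * β) := by
  have hc : (0 : ℝ) < T.card := by exact_mod_cast hT.card_pos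
  have β0 : 0 ≤ β := by
    obtain ⟨τ, _⟩ := hT
    have := (Nat.cast_nonneg _).trans (hβ (p τ))
    exact nonneg_of_mul_nonneg_left this hc
  induction j with
  | zero =>
    intro A hA hn
    simpa using hM A hA (by simpa using hn)
  | succ j ih =>
    intro A hA hn
    have e1 : (fun η => chi A η * rho T p η ^ (j + 1)) =
        fun η => (T.card : ℝ)⁻¹ * ∑ τ ∈ T, chi (A ∪ {p τ}) η * rho T p η ^ j := by
      ext η
      have : ∀ τ, chi (A ∪ {p τ}) η = chi A η * (if η (p τ) then (1 : ℝ) else 0) := by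
        intro τ; rw [chi_union]; simp [chi]
      simp_rw [this]
      rw [pow_succ]
      nth_rewrite 2 [rho]
      rw [← Finset.sum_mul, ← Finset.mul_sum]
      ring
    rw [e1, Ex_avg μ T _ (fun τ η => chi (A ∪ {p τ}) η * rho T p η ^ j)]
    have := avg_lemma T hT (fun τ => Ex μ (fun η => chi (A ∪ {p τ}) η * rho T p η ^ j))
      (fun τ => p τ ∈ A) M (n * D + j * (n * β)) (n * β) ?_ (by positivity) ?_ ?_
    · push_cast
      linarith
    · intro τ hτ hb
      refine ih _ ?_ ?_
      · intro x hx
        rcases Finset.mem_union.1 (Finset.mem_coe.1 hx) with h | h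
        · exact hA h
        · rw [Finset.mem_singleton.1 h]; exact hpG τ hτ
      · rw [Finset.card_union_of_disjoint (by simpa using hb)]; simp; omega
    · intro τ _
      have := Ex_unit μ hμ hμ1 (fun η => chi (A ∪ {p τ}) η * rho T p η ^ j)
        (fun η => mul_nonneg (chi_nonneg _ _) (pow_nonneg (rho_nonneg _ _ _) _))
        (fun η => mul_le_one₀ (chi_le_one _ _) (pow_nonneg (rho_nonneg _ _ _) _)
          (pow_le_one₀ (rho_nonneg _ _ _) (rho_le_one _ _ _)))
      rw [abs_le]
      constructor <;> linarith [this.1, this.2]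
    · classical
      have : (T.filter fun τ => p τ ∈ A) ⊆ A.biUnion fun v => T.filter fun τ => p τ = v := by
        intro τ hτ
        rw [Finset.mem_filter] at hτ
        simp only [Finset.mem_biUnion, Finset.mem_filter]
        exact ⟨p τ, hτ.2, hτ.1, rfl⟩
      have h1 := (Finset.card_le_card this).trans Finset.card_biUnion_le
      have h2 : ((T.filter fun τ => p τ ∈ A).card : ℝ)
          ≤ ∑ v ∈ A, ((T.filter fun τ => p τ = v).card : ℝ) := by exact_mod_cast h1
      have h3 : ∑ v ∈ A, ((T.filter fun τ => p τ = v).card : ℝ) ≤ ∑ v ∈ A, β * T.card :=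
        Finset.sum_le_sum fun v _ => hβ v
      rw [Finset.sum_const, nsmul_eq_mul] at h3
      have h4 : (A.card : ℝ) ≤ n := by exact_mod_cast (by omega : A.card ≤ n)
      have h5 : (A.card : ℝ) * (β * T.card) ≤ n * (β * T.card) := by gcongr
      linarith

lemma second_moment {ι κ : Type} (T : Finset ι) (hT : T.Nonempty) (p : ι → V) (β : ℝ)
    (hβ : ∀ v, ((T.filter fun τ => p τ = v).card : ℝ) ≤ β * T.card)
    (G : Set V) (hpG : ∀ τ ∈ T, p τ ∈ G) (D : ℝ) (hD : 0 ≤ D)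
    (hG : ∀ a ∈ G, ∀ b ∈ G, del μ (Equiv.swap a b) ≤ D)
    (hμ : ∀ η, 0 ≤ μ η) (hμ1 : ∑ η, μ η = 1)
    (F : Finset κ) (hF : F.Nonempty) (A : κ → Finset V) (k : ℕ)
    (hA : ∀ σ ∈ F, (A σ).card = k) (hAG : ∀ σ ∈ F, ↑(A σ) ⊆ G) (γ : ℝ)
    (hγ : (((F ×ˢ F).filter fun q => ¬ Disjoint (A q.1) (A q.2)).card : ℝ)
      ≤ γ * (F ×ˢ F).card) :
    Ex μ (fun η => |(F.card : ℝ)⁻¹ * ∑ σ ∈ F, chi (A σ) η - rho T p η ^ k|)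
      ≤ Real.sqrt (8 * k * D + 8 * k ^ 2 * β + γ) := by
  have hc : (0 : ℝ) < T.card := by exact_mod_cast hT.card_pos
  have hcF : (0 : ℝ) < F.card := by exact_mod_cast hF.card_pos
  have β0 : 0 ≤ β := by
    obtain ⟨τ, _⟩ := hT
    have := (Nat.cast_nonneg _).trans (hβ (p τ))
    exact nonneg_of_mul_nonneg_left this hc
  obtain ⟨M, hM0, hM1, hM⟩ := exists_M μ G D hD hG hμ hμ1 (2 * k)
  have R := rho_moment μ T hT p β hβ G hpG D hD hμ hμ1 (2 * k) M hM0 hM1 hM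
  set X : (V → Bool) → ℝ := fun η => (F.card : ℝ)⁻¹ * ∑ σ ∈ F, chi (A σ) η with hX
  set Y : (V → Bool) → ℝ := fun η => rho T p η ^ k with hY
  have u : ∀ x : ℝ, 0 ≤ x ∧ x ≤ 1 → |x - M| ≤ 1 := fun x hx => by
    rw [abs_le]; constructor <;> linarith [hx.1, hx.2]
  have hYY : |Ex μ (fun η => Y η ^ 2) - M| ≤ 2 * k * D + 4 * k ^ 2 * β := by
    have := R (2 * k) ∅ (by simp) (by simp)
    have e : (fun η => chi ∅ η * rho T p η ^ (2 * k)) = fun η => Y η ^ 2 := by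
      ext η; simp only [chi, Finset.prod_empty, one_mul, hY]; ring
    rw [e] at this
    push_cast at this
    linarith
  have hXY : |Ex μ (fun η => X η * Y η) - M| ≤ 2 * k * D + 2 * k ^ 2 * β := by
    have e : (fun η => X η * Y η) =
        fun η => (F.card : ℝ)⁻¹ * ∑ σ ∈ F, chi (A σ) η * rho T p η ^ k := by
      ext η; simp only [hX, hY]; rw [mul_assoc, Finset.sum_mul]
    rw [e, Ex_avg μ F _ (fun σ η => chi (A σ) η * rho T p η ^ k)]
    have := avg_lemma F hF (fun σ => Ex μ (fun η => chi (A σ) η * rho T p η ^ k))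
      (fun _ => False) M (2 * k * D + 2 * k ^ 2 * β) 0 ?_ (by positivity) ?_ (by simp)
    · simpa using this
    · intro σ hσ _
      have := R k (A σ) (hAG σ hσ) (by rw [hA σ hσ]; ring)
      push_cast at this
      linarith
    · intro σ hσ
      exact u _ (Ex_unit μ hμ hμ1 (fun η => chi (A σ) η * rho T p η ^ k)
        (fun η => mul_nonneg (chi_nonneg _ _) (pow_nonneg (rho_nonneg _ _ _) _))
        (fun η => mul_le_one₀ (chi_le_one _ _) (pow_nonneg (rho_nonneg _ _ _) _)
          (pow_le_one₀ (rho_nonneg _ _ _) (rho_le_one _ _ _))))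
  have hXX : |Ex μ (fun η => X η ^ 2) - M| ≤ 2 * k * D + γ := by
    have e : (fun η => X η ^ 2) =
        fun η => ((F ×ˢ F).card : ℝ)⁻¹ * ∑ q ∈ F ×ˢ F, chi (A q.1 ∪ A q.2) η := by
      ext η; simp only [hX, chi_union]
      rw [Finset.sum_product, mul_pow, sq (∑ σ ∈ F, chi (A σ) η), Finset.sum_mul_sum,
        Finset.card_product]
      push_cast
      rw [mul_inv, sq]
    rw [e, Ex_avg μ (F ×ˢ F) _ (fun q η => chi (A q.1 ∪ A q.2) η)]
    refine avg_lemma (F ×ˢ F) (hF.product hF) (fun q => Ex μ (fun η => chi (A q.1 ∪ A q.2) η))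
      _ M (2 * k * D) γ ?_ (by positivity) ?_ hγ
    · intro q hq hd
      rw [not_not] at hd
      rw [Finset.mem_product] at hq
      have := hM (A q.1 ∪ A q.2) ?_ ?_
      · push_cast at this; exact this
      · rw [Finset.coe_union]; exact Set.union_subset (hAG _ hq.1) (hAG _ hq.2)
      · rw [Finset.card_union_of_disjoint hd, hA _ hq.1, hA _ hq.2]; ring
    · intro q _
      exact u _ (Ex_unit μ hμ hμ1 _ (chi_nonneg _) (chi_le_one _))
  have hsq : Ex μ (fun η => (X η - Y η) ^ 2) ≤ 8 * k * D + 8 * k ^ 2 * β + γ := by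
    have e : Ex μ (fun η => (X η - Y η) ^ 2) = Ex μ (fun η => X η ^ 2)
        - 2 * Ex μ (fun η => X η * Y η) + Ex μ (fun η => Y η ^ 2) := by
      unfold Ex
      rw [Finset.mul_sum, ← Finset.sum_sub_distrib, ← Finset.sum_add_distrib]
      exact Finset.sum_congr rfl fun η _ => by ring
    rw [e]
    have a1 := abs_le.1 hXX
    have a2 := abs_le.1 hXY
    have a3 := abs_le.1 hYY
    linarith [a1.2, a2.1, a3.2]
  refine Real.le_sqrt_of_sq_le (le_trans ?_ hsq)
  have cs := Finset.sum_mul_sq_le_sq_mul_sq Finset.univ (fun η => Real.sqrt (μ η))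
    (fun η => Real.sqrt (μ η) * |X η - Y η|)
  have c1 : ∀ η, Real.sqrt (μ η) * (Real.sqrt (μ η) * |X η - Y η|) = μ η * |X η - Y η| := by
    intro η; rw [← mul_assoc, Real.mul_self_sqrt (hμ η)]
  have c2 : ∀ η, Real.sqrt (μ η) ^ 2 = μ η := fun η => Real.sq_sqrt (hμ η)
  simp only [c1, mul_pow, c2, sq_abs, hμ1, one_mul] at cs
  exact cs

end Abstract

section Energy

set_option linter.unusedSectionVars false

lemma fQ_eq (N : Subgroup Γ) [N.Normal] {S : Finset Γ} (f : LocalBundleV S) (v : Γ ⧸ N)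
    (η : Conf N) : fQ N f v η = f.f 1 (fun z => η (v * QuotientGroup.mk z)) := by
  have h := f.invariant (Quotient.out v) 1 (fun z => η (v * QuotientGroup.mk z))
  rw [← h]
  unfold fQ
  rw [mul_one]
  congr 1
  ext z
  have hv : (QuotientGroup.mk (Quotient.out v) : Γ ⧸ N) = v := QuotientGroup.out_eq' v
  simp only [liftZ, QuotientGroup.mk_mul, QuotientGroup.mk_inv, hv, mul_inv_cancel_left]

lemma cQ_eq (N : Subgroup Γ) [N.Normal] {S : Finset Γ} (c : JumpRate S) (v : Γ ⧸ N) (s : Gen S)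
    (η : Conf N) : cQ N c v s η = c.c 1 s (fun z => η (v * QuotientGroup.mk z)) := by
  have h := c.invariant (Quotient.out v) 1 s (fun z => η (v * QuotientGroup.mk z))
  rw [← h]
  unfold cQ
  rw [mul_one]
  congr 1
  ext z
  have hv : (QuotientGroup.mk (Quotient.out v) : Γ ⧸ N) = v := QuotientGroup.out_eq' v
  simp only [liftZ, QuotientGroup.mk_mul, QuotientGroup.mk_inv, hv, mul_inv_cancel_left]

/-- `N` separates what is needed for the exchange symmetry of the rate. -/
def SepRate (N : Subgroup Γ) {S : Finset Γ} (c : JumpRate S) : Prop :=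
  ∀ s : Gen S, ∀ z ∈ (ballF S c.r).image ((1 : Γ) * ·) ∪ (ballF S c.r).image (1 * (s : Γ) * ·),
    ((QuotientGroup.mk z : Γ ⧸ N) = QuotientGroup.mk 1 → z = 1) ∧
    ((QuotientGroup.mk z : Γ ⧸ N) = QuotientGroup.mk (s : Γ) → z = s)

lemma cQ_exch (N : Subgroup Γ) [N.Normal] [DecidableEq (Γ ⧸ N)] {S : Finset Γ} (c : JumpRate S)
    (hN : SepRate N c) (v : Γ ⧸ N) (s : Gen S) (η : Conf N) :
    cQ N c v s (exchQ N v s η) = cQ N c v s η := by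
  rw [cQ_eq, cQ_eq, ← c.symm_exch 1 s (fun z => η (v * QuotientGroup.mk z))]
  refine c.localized 1 s _ _ fun z hz => ?_
  obtain ⟨h1, h2⟩ := hN s z hz
  simp only [exchQ, exch, one_mul]
  by_cases a1 : z = 1
  · subst a1; simp
  by_cases a2 : z = s
  · subst a2
    simp [a1]
    intro h; exact absurd (h1 (by rw [QuotientGroup.mk_one, (QuotientGroup.eq_one_iff _).2 h])) a1
  have b1 : ¬ (v * QuotientGroup.mk z = v) := fun h => a1 (h1 (by
    rw [QuotientGroup.mk_one]; exact mul_eq_left.1 h))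
  have b2 : ¬ (v * QuotientGroup.mk z = v * QuotientGroup.mk (s : Γ)) := fun h =>
    a2 (h2 (mul_left_cancel h))
  rw [if_neg b1, if_neg b2, if_neg a1, if_neg a2]

lemma exchQ_eq (N : Subgroup Γ) [N.Normal] [DecidableEq (Γ ⧸ N)] (v : Γ ⧸ N) (s : Γ)
    (η : Conf N) :
    exchQ N v s η = permConf (Equiv.swap v (v * QuotientGroup.mk s)) η := by
  ext z
  simp only [exchQ, exch, permConf_apply, Equiv.swap_apply_def]
  split_ifs <;> rfl

lemma exchQ_invol (N : Subgroup Γ) [N.Normal] [DecidableEq (Γ ⧸ N)] (v : Γ ⧸ N) (s : Γ)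
    (η : Conf N) : exchQ N v s (exchQ N v s η) = η := by
  rw [exchQ_eq, exchQ_eq]
  ext z
  simp [permConf_apply]

/-- Unnormalised energy of a bond. -/
noncomputable def bondE (N : Subgroup Γ) [N.Normal] [Fintype (Γ ⧸ N)] [DecidableEq (Γ ⧸ N)]
    (μ : Conf N → ℝ) (v : Γ ⧸ N) (s : Γ) : ℝ :=
  ∑ η, nuU N η * (sqrtDens N μ (exchQ N v s η) - sqrtDens N μ η) ^ 2

lemma bondE_inv (N : Subgroup Γ) [N.Normal] [Fintype (Γ ⧸ N)] [DecidableEq (Γ ⧸ N)]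
    (μ : Conf N → ℝ) (hμ : IsInvariant N μ) (v : Γ ⧸ N) (s : Γ) :
    bondE N μ v s = bondE N μ 1 s := by
  unfold bondE
  rw [← Equiv.sum_comp (permConf (Equiv.mulLeft v⁻¹))]
  refine Finset.sum_congr rfl fun η _ => ?_
  have h1 : permConf (Equiv.mulLeft v⁻¹) η = actQ N v η := rfl
  have h2 : exchQ N v s (actQ N v η) = actQ N v (exchQ N 1 s η) := by
    ext z
    simp only [exchQ, exch, actQ, inv_mul_eq_iff_eq_mul, mul_one, one_mul, inv_mul_cancel,
      inv_mul_cancel_left]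
  have h3 : ∀ ξ, sqrtDens N μ (actQ N v ξ) = sqrtDens N μ ξ := by
    intro ξ; simp only [sqrtDens, dens, hμ v ξ]
  rw [h1, h2, h3, h3]
  rfl

lemma ImGen_ge (N : Subgroup Γ) [N.Normal] [Fintype (Γ ⧸ N)] [DecidableEq (Γ ⧸ N)]
    {S : Finset Γ} (c : JumpRate S) (hN : SepRate N c)
    (μ : Conf N → ℝ) (hμ : IsInvariant N μ) (s : Gen S) :
    c.c₀ / 2 * (Fintype.card (Γ ⧸ N) * bondE N μ 1 s) ≤ ImGen N c μ := by
  have hν : ∀ η, 0 ≤ nuU N η := fun η => by unfold nuU; positivity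
  have e1 : ImGen N c μ = ∑ e : (Γ ⧸ N) × Gen S, (1 / 2) * ∑ η, nuU N η *
    (cQ N c e.1 e.2 η * (sqrtDens N μ (exchQ N e.1 (e.2 : Γ) η) - sqrtDens N μ η) ^ 2) := by
    unfold ImGen Lgen
    simp_rw [Finset.mul_sum]
    rw [Finset.sum_comm, ← Finset.sum_neg_distrib]
    refine Finset.sum_congr rfl fun e _ => ?_
    set h := sqrtDens N μ
    have inv : Function.Involutive (exchQ N e.1 (e.2 : Γ)) := exchQ_invol N e.1 e.2
    have r : ∑ η, nuU N η * (h η * (cQ N c e.1 e.2 η * (h (exchQ N e.1 e.2 η) - h η)))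
        = ∑ η, nuU N η * (h (exchQ N e.1 e.2 η) *
            (cQ N c e.1 e.2 η * (h η - h (exchQ N e.1 e.2 η)))) := by
      rw [← Equiv.sum_comp inv.toPerm]
      refine Finset.sum_congr rfl fun η _ => ?_
      simp only [Function.Involutive.coe_toPerm]
      rw [cQ_exch N c hN, exchQ_invol]
      rfl
    have r2 : ∑ η, 1 / 2 * (nuU N η * (cQ N c e.1 e.2 η * (h (exchQ N e.1 e.2 η) - h η) ^ 2))
        = - (1 / 2) * (∑ η, nuU N η * (h η * (cQ N c e.1 e.2 η * (h (exchQ N e.1 e.2 η) - h η)))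
          + ∑ η, nuU N η * (h (exchQ N e.1 e.2 η) *
            (cQ N c e.1 e.2 η * (h η - h (exchQ N e.1 e.2 η))))) := by
      rw [← Finset.sum_add_distrib, Finset.mul_sum]
      exact Finset.sum_congr rfl fun η _ => by ring
    rw [r2, ← r]; ring
  rw [e1, Fintype.sum_prod_type]
  have e2 : c.c₀ / 2 * (Fintype.card (Γ ⧸ N) * bondE N μ 1 s)
      = ∑ v : Γ ⧸ N, c.c₀ / 2 * bondE N μ v s := by
    simp_rw [bondE_inv N μ hμ]
    rw [Finset.sum_const, nsmul_eq_mul, Finset.card_univ]; ring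
  rw [e2]
  refine Finset.sum_le_sum fun v _ => ?_
  have hc : ∀ s' η, 0 ≤ cQ N c v s' η := fun s' η => c.c₀_pos.le.trans (c.nondeg _ _ _)
  refine le_trans ?_ (Finset.single_le_sum (f := fun s' : Gen S => (1 / 2) * ∑ η, nuU N η *
    (cQ N c v s' η * (sqrtDens N μ (exchQ N v (s' : Γ) η) - sqrtDens N μ η) ^ 2))
    (fun s' _ => mul_nonneg (by norm_num) (Finset.sum_nonneg fun η _ =>
      mul_nonneg (hν η) (mul_nonneg (hc s' η) (sq_nonneg _)))) (Finset.mem_univ s))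
  unfold bondE
  rw [Finset.mul_sum, Finset.mul_sum]
  refine Finset.sum_le_sum fun η _ => ?_
  have h1 : c.c₀ ≤ cQ N c v s η := c.nondeg _ _ _
  have h2 := mul_nonneg (hν η)
    (sq_nonneg (sqrtDens N μ (exchQ N v (s : Γ) η) - sqrtDens N μ η))
  nlinarith [mul_le_mul_of_nonneg_right h1 h2]

lemma del_edge (N : Subgroup Γ) [N.Normal] [Fintype (Γ ⧸ N)] [DecidableEq (Γ ⧸ N)]
    (μ : Conf N → ℝ) (hP : IsProb N μ) (v : Γ ⧸ N) (s : Γ) :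
    del μ (Equiv.swap v (v * QuotientGroup.mk s)) ≤ 2 * Real.sqrt (bondE N μ v s) := by
  set h := sqrtDens N μ with hh
  set n : ℝ := (Fintype.card (Conf N) : ℝ) with hn
  have n0 : 0 < n := by
    rw [hn]; exact_mod_cast Fintype.card_pos
  have hsq : ∀ η, μ η = n⁻¹ * h η ^ 2 := by
    intro η
    have hd : 0 ≤ dens N μ η := mul_nonneg n0.le (hP.1 η)
    rw [hh, sqrtDens, Real.sq_sqrt hd, dens, ← hn]
    field_simp
  have hex : ∀ η : Conf N, (fun z => η (Equiv.swap v (v * QuotientGroup.mk s) z))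
    = exchQ N v s η := fun η => (exchQ_eq N v s η).symm
  have inv : Function.Involutive (exchQ N v s) := exchQ_invol N v s
  have s1 : ∑ η, n⁻¹ * h η ^ 2 = 1 := by rw [← hP.2]; exact Finset.sum_congr rfl fun η _ => (hsq η).symm
  have s2 : ∑ η, n⁻¹ * h (exchQ N v s η) ^ 2 = 1 := by
    rw [← s1]; exact Equiv.sum_comp inv.toPerm (fun η => n⁻¹ * h η ^ 2)
  have cs := Finset.sum_mul_sq_le_sq_mul_sq Finset.univ
    (fun η => Real.sqrt n⁻¹ * |h (exchQ N v s η) - h η|)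
    (fun η => Real.sqrt n⁻¹ * |h (exchQ N v s η) + h η|)
  have q : Real.sqrt n⁻¹ ^ 2 = n⁻¹ := Real.sq_sqrt (inv_nonneg.2 n0.le)
  have c1 : ∀ η, Real.sqrt n⁻¹ * |h (exchQ N v s η) - h η| *
      (Real.sqrt n⁻¹ * |h (exchQ N v s η) + h η|) = |μ (exchQ N v s η) - μ η| := by
    intro η
    rw [hsq, hsq η, ← mul_sub, sq_sub_sq, abs_mul, abs_mul, abs_of_nonneg (inv_nonneg.2 n0.le)]
    rw [mul_mul_mul_comm, ← sq, q, mul_comm |h (exchQ N v s η) - h η|]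
  simp only [c1, mul_pow, q, sq_abs] at cs
  have b : ∑ η, n⁻¹ * (h (exchQ N v s η) + h η) ^ 2 ≤ 4 := by
    calc _ ≤ ∑ η, (2 * (n⁻¹ * h (exchQ N v s η) ^ 2) + 2 * (n⁻¹ * h η ^ 2)) := by
          refine Finset.sum_le_sum fun η _ => ?_
          have : 0 ≤ n⁻¹ * (h (exchQ N v s η) - h η) ^ 2 :=
            mul_nonneg (inv_nonneg.2 n0.le) (sq_nonneg _)
          linarith
      _ = 4 := by rw [Finset.sum_add_distrib, ← Finset.mul_sum Finset.univ (fun η => n⁻¹ * h η ^ 2),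
            ← Finset.mul_sum Finset.univ (fun η => n⁻¹ * h (exchQ N v s η) ^ 2), s1, s2]; norm_num
  have hB : bondE N μ v s = ∑ η, n⁻¹ * (h (exchQ N v s η) - h η) ^ 2 := rfl
  have hB0 : 0 ≤ bondE N μ v s := by
    rw [hB]; exact Finset.sum_nonneg fun η _ => mul_nonneg (inv_nonneg.2 n0.le) (sq_nonneg _)
  rw [← hB] at cs
  unfold del
  simp only [hex]
  refine abs_le_of_sq_le_sq' ?_ (by positivity) |>.2
  rw [mul_pow, Real.sq_sqrt hB0]
  nlinarith

lemma del_edge_bound (N : Subgroup Γ) [N.Normal] [Fintype (Γ ⧸ N)] [DecidableEq (Γ ⧸ N)]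
    {S : Finset Γ} (c : JumpRate S) (hN : SepRate N c)
    (μ : Conf N → ℝ) (hP : IsProb N μ) (hμ : IsInvariant N μ) (C t : ℝ) (ht : 0 < t)
    (hI : ImGen N c μ ≤ C * (N.index : ℝ) / t) (v : Γ ⧸ N) (s : Gen S) :
    del μ (Equiv.swap v (v * QuotientGroup.mk (s : Γ)))
      ≤ 2 * Real.sqrt (2 * C / c.c₀) / Real.sqrt t := by
  refine (del_edge N μ hP v s).trans ?_
  rw [bondE_inv N μ hμ, mul_div_assoc, ← Real.sqrt_div' _ ht.le]
  refine mul_le_mul_of_nonneg_left (Real.sqrt_le_sqrt ?_) (by norm_num)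
  have h := (ImGen_ge N c hN μ hμ s).trans hI
  have hidx : (N.index : ℝ) = Fintype.card (Γ ⧸ N) := by
    rw [Subgroup.index, Nat.card_eq_fintype_card]
  rw [hidx] at h
  have hc : (0 : ℝ) < Fintype.card (Γ ⧸ N) := by exact_mod_cast Fintype.card_pos
  have c0 := c.c₀_pos
  rw [le_div_iff₀ ht] at h
  rw [le_div_iff₀ ht, le_div_iff₀ c0]
  have : (Fintype.card (Γ ⧸ N) : ℝ) * (bondE N μ 1 s * t * c.c₀)
      ≤ (Fintype.card (Γ ⧸ N) : ℝ) * (2 * C) := by linarith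
  exact le_of_mul_le_mul_left this hc

lemma del_ball (N : Subgroup Γ) [N.Normal] [Fintype (Γ ⧸ N)] [DecidableEq (Γ ⧸ N)]
    (S : Finset Γ) (μ : Conf N → ℝ) (κ : ℝ) (hκ : 0 ≤ κ)
    (h : ∀ (v : Γ ⧸ N) (s : Gen S), del μ (Equiv.swap v (v * QuotientGroup.mk (s : Γ))) ≤ κ)
    (n : ℕ) : ∀ x ∈ ballF S n,
      del μ (Equiv.swap (1 : Γ ⧸ N) (QuotientGroup.mk x)) ≤ 2 * n * κ := by
  induction n with
  | zero =>
    intro x hx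
    simp only [ballF, Finset.mem_singleton] at hx
    subst hx
    rw [QuotientGroup.mk_one, Equiv.swap_self]
    have : del μ (Equiv.refl (Γ ⧸ N)) = 0 := del_one μ
    simp [this]
  | succ n ih =>
    intro x hx
    simp only [ballF, Finset.mem_union] at hx
    rcases hx with hx | hx
    · have := ih x hx
      push_cast; linarith
    · obtain ⟨y, hy, s, hs, rfl⟩ := Finset.mem_mul.1 hx
      have h2 := h (QuotientGroup.mk y) ⟨s, hs⟩
      have := del_swap_tri μ _ _ _ (ih y hy) h2
      rw [QuotientGroup.mk_mul]
      push_cast; linarith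

end Energy

section GroupPart

set_option linter.unusedSectionVars false

lemma exists_coeff (B : Finset Γ) (g : ({a // a ∈ B} → Bool) → ℝ) :
    ∃ a : Finset Γ → ℝ, ∀ w : Γ → ℝ,
      ∑ ζ : ({a // a ∈ B} → Bool), (∏ b : {a // a ∈ B}, bw (w b) (ζ b)) * g ζ
        = ∑ U ∈ B.powerset, a U * ∏ u ∈ U, w u := by
  let e : ({a // a ∈ B} → Bool) → Γ → Bool := fun ζ z => if h : z ∈ B then ζ ⟨z, h⟩ else false
  let al : Bool → ℝ := fun z => if z then 0 else 1
  let be : Bool → ℝ := fun z => if z then 1 else -1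
  refine ⟨fun U => ∑ ζ, ((∏ u ∈ U, be (e ζ u)) * ∏ u ∈ B \ U, al (e ζ u)) * g ζ, fun w => ?_⟩
  simp_rw [Finset.sum_mul]
  rw [Finset.sum_comm]
  refine Finset.sum_congr rfl fun ζ _ => ?_
  have h1 : ∏ b : {a // a ∈ B}, bw (w b) (ζ b) = ∏ b ∈ B, (be (e ζ b) * w b + al (e ζ b)) := by
    rw [← Finset.prod_coe_sort B]
    refine Finset.prod_congr rfl fun b _ => ?_
    have : e ζ b = ζ b := by simp [e]
    rw [this]
    cases ζ b <;> simp [bw, be, al]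
    ring
  rw [h1, Finset.prod_add, Finset.sum_mul]
  refine Finset.sum_congr rfl fun U _ => ?_
  rw [Finset.prod_mul_distrib]
  ring

lemma bundle_coeff {S : Finset Γ} (f : LocalBundleV S) :
    ∃ a : Finset Γ → ℝ,
      (∀ η : Γ → Bool, f.f 1 η = ∑ U ∈ (ballF S f.r).powerset, a U *
        ∏ u ∈ U, (if η u then (1 : ℝ) else 0)) ∧
      (∀ ρ : ℝ, globalAvg f ρ = ∑ U ∈ (ballF S f.r).powerset, a U * ρ ^ U.card) := by
  obtain ⟨a, ha⟩ := exists_coeff (ballF S f.r)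
    (fun ζ => f.f 1 (fun z => if h : z ∈ ballF S f.r then ζ ⟨z, h⟩ else false))
  refine ⟨a, fun η => ?_, fun ρ => ?_⟩
  · rw [← ha]
    rw [Fintype.sum_eq_single (fun b : {a // a ∈ ballF S f.r} => η b)]
    · rw [Finset.prod_eq_one, one_mul]
      · refine f.localized 1 _ _ fun z hz => ?_
        simp only [one_mul, Finset.image_id'] at hz
        simp [hz]
      · intro b _
        cases h : η b <;> simp [bw, h]
    · intro ζ hζ
      obtain ⟨b, hb⟩ := Function.ne_iff.1 hζ
      rw [Finset.prod_eq_zero (Finset.mem_univ b), zero_mul]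
      cases h : η b <;> cases h' : ζ b <;> simp_all [bw]
  · have := ha (fun _ => ρ)
    simp only [Finset.prod_const] at this
    rw [← this]
    rfl

lemma ball_exhaust (S : Finset Γ) (hS_symm : ∀ s ∈ S, s⁻¹ ∈ S)
    (hS_gen : Subgroup.closure (S : Set Γ) = ⊤) (x : Γ) : ∃ n, x ∈ ballF S n := by
  have hx : x ∈ Subgroup.closure (S : Set Γ) := by rw [hS_gen]; trivial
  induction hx using Subgroup.closure_induction_right with
  | one => exact ⟨0, one_mem_ballF S 0⟩
  | mul_right x hx y hy ih =>
    obtain ⟨n, hn⟩ := ih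
    exact ⟨n + 1, Finset.mem_union_right _ (Finset.mul_mem_mul hn hy)⟩
  | mul_inv_cancel x hx y hy ih =>
    obtain ⟨n, hn⟩ := ih
    exact ⟨n + 1, Finset.mem_union_right _ (Finset.mul_mem_mul hn (hS_symm y hy))⟩

lemma mem_ball_wordNorm (S : Finset Γ) (hS_symm : ∀ s ∈ S, s⁻¹ ∈ S)
    (hS_gen : Subgroup.closure (S : Set Γ) = ⊤) (x : Γ) : x ∈ ballF S (wordNorm S x) :=
  Nat.sInf_mem (s := {n | x ∈ ballF S n}) (ball_exhaust S hS_symm hS_gen x)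

lemma ballF_mono (S : Finset Γ) : Monotone (ballF S) :=
  monotone_nat_of_le_succ fun _ => Finset.subset_union_left

lemma folner_ball (S : Finset Γ) (F : ℕ → Finset Γ) (hF : IsFolner S F) (n : ℕ) :
    ∀ g ∈ ballF S n, Tendsto (fun i => ((((F i).image (· * g)) \ F i).card : ℝ) / (F i).card)
      atTop (nhds 0) := by
  induction n with
  | zero =>
    intro g hg
    simp only [ballF, Finset.mem_singleton] at hg
    subst hg
    simp
  | succ n ih =>
    intro g hg
    simp only [ballF, Finset.mem_union] at hg
    rcases hg with hg | hg
    · exact ih g hg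
    · obtain ⟨y, hy, s, hs, rfl⟩ := Finset.mem_mul.1 hg
      have h := (ih y hy).add hF.2
      rw [add_zero] at h
      refine squeeze_zero (fun i => by positivity) (fun i => ?_) h
      rw [← add_div]
      refine div_le_div_of_nonneg_right ?_ (by positivity)
      have hsub : (F i).image (· * (y * s)) \ F i ⊆
          ((F i).image (· * y) \ F i).image (· * s) ∪ ((F i * S) \ F i) := by
        intro z hz
        rw [Finset.mem_sdiff, Finset.mem_image] at hz
        obtain ⟨⟨a, ha, rfl⟩, hz⟩ := hz
        rw [Finset.mem_union]
        by_cases hm : a * y ∈ F i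
        · right
          rw [Finset.mem_sdiff]
          exact ⟨by rw [← mul_assoc]; exact Finset.mul_mem_mul hm hs, hz⟩
        · left
          exact Finset.mem_image.2 ⟨a * y, Finset.mem_sdiff.2
            ⟨Finset.mem_image_of_mem _ ha, hm⟩, by simp [mul_assoc]⟩
      have := (Finset.card_le_card hsub).trans (Finset.card_union_le _ _)
      have h2 := this.trans (Nat.add_le_add_right Finset.card_image_le _)
      exact_mod_cast h2

lemma fibre_card (F P J : Finset Γ) (hP : P ⊆ F)
    (hd : ∀ g ∈ J, ∀ g' ∈ J, ∀ p ∈ P, ∀ p' ∈ P, p * g = p' * g' → g = g') :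
    J.card * P.card ≤ F.card + ∑ g ∈ J, (F.image (· * g) \ F).card := by
  have h1 : ((J ×ˢ P).image fun q => q.2 * q.1).card = J.card * P.card := by
    rw [Finset.card_image_of_injOn, Finset.card_product]
    rintro ⟨g, p⟩ h ⟨g', p'⟩ h' e
    simp only [Finset.coe_product, Set.mem_prod, Finset.mem_coe] at h h' e
    have := hd g h.1 g' h'.1 p h.2 p' h'.2 e
    subst this
    rw [mul_right_cancel e]
  rw [← h1]
  have hsub : ((J ×ˢ P).image fun q => q.2 * q.1) ⊆
      F ∪ J.biUnion fun g => F.image (· * g) \ F := by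
    intro z hz
    obtain ⟨⟨g, p⟩, h, rfl⟩ := Finset.mem_image.1 hz
    rw [Finset.mem_product] at h
    rw [Finset.mem_union, Finset.mem_biUnion]
    by_cases hm : p * g ∈ F
    · exact Or.inl hm
    · exact Or.inr ⟨g, h.1, Finset.mem_sdiff.2 ⟨Finset.mem_image_of_mem _ (hP h.2), hm⟩⟩
  exact (Finset.card_le_card hsub).trans ((Finset.card_union_le _ _).trans
    (Nat.add_le_add_left Finset.card_biUnion_le _))

lemma fibre_small [Infinite Γ] (S : Finset Γ) (hS_symm : ∀ s ∈ S, s⁻¹ ∈ S)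
    (hS_gen : Subgroup.closure (S : Set Γ) = ⊤) (F : ℕ → Finset Γ) (hF : IsFolner S F)
    (β : ℝ) (hβ : 0 < β) : ∃ J : Finset Γ, ∀ᶠ i in atTop, ∀ P ⊆ F i,
      (∀ g ∈ J, ∀ g' ∈ J, ∀ p ∈ P, ∀ p' ∈ P, p * g = p' * g' → g = g') →
      (P.card : ℝ) ≤ β * (F i).card := by
  obtain ⟨R, hR⟩ := exists_nat_gt (2 / β)
  obtain ⟨J, hJ⟩ := Infinite.exists_subset_card_eq Γ R
  refine ⟨J, ?_⟩
  have ht : Tendsto (fun i => ∑ g ∈ J, ((((F i).image (· * g)) \ F i).card : ℝ) / (F i).card)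
      atTop (nhds 0) := by
    have := tendsto_finsetSum J (fun g _ => folner_ball S F hF _ g
      (mem_ball_wordNorm S hS_symm hS_gen g))
    simpa using this
  filter_upwards [ht.eventually (gt_mem_nhds zero_lt_one)] with i hi P hP hd
  have h := fibre_card (F i) P J hP hd
  have hc : (0 : ℝ) < (F i).card := by exact_mod_cast (hF.1 i).card_pos
  rw [← Finset.sum_div, div_lt_one hc] at hi
  rw [hJ] at h
  have h' : (R : ℝ) * P.card ≤ (F i).card +
    ∑ g ∈ J, (((F i).image (· * g) \ F i).card : ℝ) := by exact_mod_cast h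
  have h2 : (2 : ℝ) < R * β := by rwa [div_lt_iff₀ hβ] at hR
  have hRpos : (0 : ℝ) < R := lt_trans (by positivity) hR
  have : (R : ℝ) * P.card ≤ R * (β * (F i).card) := by nlinarith
  exact le_of_mul_le_mul_left this hRpos

lemma folner_card [Infinite Γ] (S : Finset Γ) (hS_symm : ∀ s ∈ S, s⁻¹ ∈ S)
    (hS_gen : Subgroup.closure (S : Set Γ) = ⊤) (F : ℕ → Finset Γ) (hF : IsFolner S F) :
    Tendsto (fun i => ((F i).card : ℝ)) atTop atTop := by
  rw [tendsto_atTop]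
  intro b
  obtain ⟨J, hJ⟩ := fibre_small S hS_symm hS_gen F hF (|b| + 1)⁻¹ (by positivity)
  filter_upwards [hJ] with i hi
  obtain ⟨x, hx⟩ := hF.1 i
  have := hi {x} (by simpa using hx) (by
    intro g _ g' _ p hp p' hp' e
    rw [Finset.mem_singleton] at hp hp'
    rw [hp, hp'] at e
    exact mul_left_cancel e)
  rw [Finset.card_singleton, Nat.cast_one, le_inv_mul_iff₀ (by positivity)] at this
  linarith [le_abs_self b]

lemma bFol_props [Infinite Γ] (S : Finset Γ) (hS_symm : ∀ s ∈ S, s⁻¹ ∈ S)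
    (hS_gen : Subgroup.closure (S : Set Γ) = ⊤) (F : ℕ → Finset Γ) (hF : IsFolner S F) :
    Tendsto (bFol S F) atTop atTop ∧
      ∀ᶠ K in atTop, ∀ x ∈ F (bFol S F K), (wordNorm S x : ℝ) ≤ K := by
  have bdd : ∀ K : ℝ, BddAbove {i | ∀ x ∈ F i, (wordNorm S x : ℝ) ≤ K} := by
    intro K
    have h := (folner_card S hS_symm hS_gen F hF).eventually_gt_atTop
      ((ballF S ⌊K⌋₊).card : ℝ)
    obtain ⟨i0, h0⟩ := eventually_atTop.1 h
    refine ⟨i0, fun i hi => ?_⟩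
    by_contra hlt
    push Not at hlt
    have h1 := h0 i hlt.le
    have h2 : F i ⊆ ballF S ⌊K⌋₊ := fun x hx =>
      ballF_mono S (Nat.le_floor (hi x hx)) (mem_ball_wordNorm S hS_symm hS_gen x)
    have h3 := Finset.card_le_card h2
    have : ((F i).card : ℝ) ≤ (ballF S ⌊K⌋₊).card := by exact_mod_cast h3
    linarith
  have key : ∀ i, ∀ᶠ K : ℝ in atTop, ∀ x ∈ F i, (wordNorm S x : ℝ) ≤ K := by
    intro i
    exact (Filter.eventually_all_finset (F i)).2 fun x _ => eventually_ge_atTop _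
  refine ⟨?_, ?_⟩
  · rw [tendsto_atTop]
    intro i
    filter_upwards [key i] with K hK
    exact le_csSup (bdd K) hK
  · filter_upwards [key 0] with K hK
    exact Nat.sSup_mem (s := {i | ∀ x ∈ F i, (wordNorm S x : ℝ) ≤ K}) ⟨0, hK⟩ (bdd K)

lemma sep_inj (Γs : ℕ → Subgroup Γ) (hdesc : ∀ m, Γs (m + 1) ≤ Γs m)
    (hsep : ∀ x : Γ, (∀ m, x ∈ Γs m) → x = 1) (W : Finset Γ) :
    ∀ᶠ m in atTop, ∀ x ∈ W, ∀ y ∈ W,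
      (QuotientGroup.mk x : Γ ⧸ Γs m) = QuotientGroup.mk y → x = y := by
  have anti : Antitone Γs := antitone_nat_of_succ_le hdesc
  refine (Filter.eventually_all_finset W).2 fun x _ => (Filter.eventually_all_finset W).2 fun y _ => ?_
  by_cases h : x⁻¹ * y = 1
  · exact Eventually.of_forall fun m _ => inv_mul_eq_one.1 h
  · have : ∃ m, x⁻¹ * y ∉ Γs m := by
      by_contra hc
      push Not at hc
      exact h (hsep _ hc)
    obtain ⟨m0, hm0⟩ := this
    filter_upwards [eventually_ge_atTop m0] with m hm e
    exact absurd (anti hm (QuotientGroup.eq.1 e)) hm0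

end GroupPart

section Final

set_option linter.unusedSectionVars false

lemma quot_bound (N : Subgroup Γ) [N.Normal] [Fintype (Γ ⧸ N)] [DecidableEq (Γ ⧸ N)]
    {S : Finset Γ} (f : LocalBundleV S) (a : Finset Γ → ℝ)
    (ha1 : ∀ η : Γ → Bool, f.f 1 η = ∑ U ∈ (ballF S f.r).powerset, a U *
        ∏ u ∈ U, (if η u then (1 : ℝ) else 0))
    (ha2 : ∀ ρ : ℝ, globalAvg f ρ = ∑ U ∈ (ballF S f.r).powerset, a U * ρ ^ U.card)
    (μ : Conf N → ℝ) (hP : IsProb N μ) (Fi Fb : Finset Γ) (hFi : Fi.Nonempty) (hFb : Fb.Nonempty)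
    (d β : ℝ) (hd : 0 ≤ d)
    (hdb : ∀ τ ∈ Fb, del μ (Equiv.swap (1 : Γ ⧸ N) (QuotientGroup.mk τ)) ≤ d)
    (hdi : ∀ τ ∈ Fi * ballF S f.r, del μ (Equiv.swap (1 : Γ ⧸ N) (QuotientGroup.mk τ)) ≤ d)
    (hinj : ∀ x ∈ Fi * ballF S f.r, ∀ y ∈ Fi * ballF S f.r,
      (QuotientGroup.mk x : Γ ⧸ N) = QuotientGroup.mk y → x = y)
    (hβ : ∀ v : Γ ⧸ N, ((Fb.filter fun τ => (QuotientGroup.mk τ : Γ ⧸ N) = v).card : ℝ)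
      ≤ β * Fb.card) :
    Emeas N μ (fun η => |fbarQ N f Fi 1 η - globalAvg f (etabarQ N Fb 1 η)|)
      ≤ ∑ U ∈ (ballF S f.r).powerset, |a U| *
        Real.sqrt (8 * U.card * (3 * d) + 8 * (U.card : ℝ) ^ 2 * β
          + (U.card : ℝ) ^ 2 / Fi.card) := by
  set Pw := (ballF S f.r).powerset
  let A : Finset Γ → Γ → Finset (Γ ⧸ N) := fun U σ =>
    U.image (fun u => (QuotientGroup.mk σ : Γ ⧸ N) * QuotientGroup.mk u)
  let p : Γ → Γ ⧸ N := fun τ => QuotientGroup.mk τ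
  have hAinj : ∀ U ∈ Pw, ∀ σ ∈ Fi, Set.InjOn
      (fun u => (QuotientGroup.mk σ : Γ ⧸ N) * QuotientGroup.mk u) (U : Set Γ) := by
    intro U hU σ hσ u hu u' hu' e
    have hU' := Finset.mem_powerset.1 hU
    have := hinj (σ * u) (Finset.mul_mem_mul hσ (hU' hu)) (σ * u')
      (Finset.mul_mem_mul hσ (hU' hu')) (by simpa [QuotientGroup.mk_mul] using e)
    exact mul_left_cancel this
  have hf : ∀ η : Conf N, fbarQ N f Fi 1 η
      = ∑ U ∈ Pw, a U * ((Fi.card : ℝ)⁻¹ * ∑ σ ∈ Fi, chi (A U σ) η) := by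
    intro η
    unfold fbarQ
    have : ∀ σ ∈ Fi, fQ N f (QuotientGroup.mk σ * 1) η = ∑ U ∈ Pw, a U * chi (A U σ) η := by
      intro σ hσ
      rw [fQ_eq, ha1]
      refine Finset.sum_congr rfl fun U hU => ?_
      unfold chi
      rw [Finset.prod_image (hAinj U hU σ hσ), mul_one]
    rw [Finset.sum_congr rfl this, Finset.sum_comm, Finset.mul_sum]
    refine Finset.sum_congr rfl fun U _ => ?_
    rw [← Finset.mul_sum]; ring
  have hr : ∀ η : Conf N, etabarQ N Fb 1 η = rho Fb p η := by
    intro η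
    simp only [etabarQ, rho, mul_one, p]
  have e1 : Emeas N μ (fun η => |fbarQ N f Fi 1 η - globalAvg f (etabarQ N Fb 1 η)|)
      ≤ ∑ U ∈ Pw, |a U| * Ex μ (fun η =>
        |(Fi.card : ℝ)⁻¹ * ∑ σ ∈ Fi, chi (A U σ) η - rho Fb p η ^ U.card|) := by
    unfold Emeas Ex
    simp_rw [Finset.mul_sum]
    rw [Finset.sum_comm]
    refine Finset.sum_le_sum fun η _ => ?_
    rw [hf, hr, ha2, ← Finset.sum_sub_distrib]
    simp_rw [← Finset.mul_sum]
    refine (mul_le_mul_of_nonneg_left (Finset.abs_sum_le_sum_abs _ _) (hP.1 η)).trans ?_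
    rw [Finset.mul_sum]
    refine Finset.sum_le_sum fun U _ => ?_
    rw [← mul_sub, abs_mul]
    exact le_of_eq (by ring)
  refine e1.trans (Finset.sum_le_sum fun U hU => mul_le_mul_of_nonneg_left ?_ (abs_nonneg _))
  have hU' := Finset.mem_powerset.1 hU
  have hc : (0 : ℝ) < Fi.card := by exact_mod_cast hFi.card_pos
  refine second_moment μ Fb hFb p β hβ
    {v | del μ (Equiv.swap (1 : Γ ⧸ N) v) ≤ d} hdb (3 * d) (by positivity) ?_ hP.1 hP.2 Fi hFi
    (A U) U.card ?_ ?_ _ ?_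
  · intro x hx y hy
    rw [Set.mem_ofPred_eq, Equiv.swap_comm] at hx
    have := del_swap_tri μ x 1 y hx hy
    linarith
  · intro σ hσ
    exact Finset.card_image_of_injOn (hAinj U hU σ hσ)
  · intro σ hσ v hv
    obtain ⟨u, hu, rfl⟩ := Finset.mem_image.1 (Finset.mem_coe.1 hv)
    exact hdi (σ * u) (Finset.mul_mem_mul hσ (hU' hu))
  · have hsub : ((Fi ×ˢ Fi).filter fun q => ¬ Disjoint (A U q.1) (A U q.2)) ⊆
        (Fi ×ˢ (U ×ˢ U)).image (fun q => (q.1, q.1 * q.2.1 * q.2.2⁻¹)) := by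
      rintro ⟨σ, σ'⟩ hq
      rw [Finset.mem_filter, Finset.mem_product, Finset.not_disjoint_iff] at hq
      obtain ⟨⟨h1, h2⟩, v, hv, hv'⟩ := hq
      obtain ⟨u, hu, rfl⟩ := Finset.mem_image.1 hv
      obtain ⟨u', hu', e⟩ := Finset.mem_image.1 hv'
      have := hinj (σ' * u') (Finset.mul_mem_mul h2 (hU' hu')) (σ * u)
        (Finset.mul_mem_mul h1 (hU' hu)) (by simpa [QuotientGroup.mk_mul] using e)
      refine Finset.mem_image.2 ⟨(σ, (u, u')), ?_, ?_⟩
      · simp only [Finset.mem_product]; exact ⟨h1, hu, hu'⟩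
      · simp only [← this, mul_inv_cancel_right]
    have h1 := (Finset.card_le_card hsub).trans Finset.card_image_le
    rw [Finset.card_product, Finset.card_product] at h1
    have h2 : (((Fi ×ˢ Fi).filter fun q => ¬ Disjoint (A U q.1) (A U q.2)).card : ℝ)
        ≤ Fi.card * (U.card * U.card) := by exact_mod_cast h1
    refine h2.trans (le_of_eq ?_)
    rw [Finset.card_product]; push_cast; field_simp

lemma limsup_bound (u : ℝ → ℕ → ℝ) (H : ℝ → ℝ) (hu0 : ∀ ε m, 0 ≤ u ε m)
    (hu : ∀ ε, 0 < ε → ∀ᶠ m in atTop, u ε m ≤ H ε) (hH : ContinuousAt H 0) :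
    0 ≤ limsup (fun ε => limsup (u ε) atTop) (nhdsWithin 0 (Set.Ioi 0)) ∧
    limsup (fun ε => limsup (u ε) atTop) (nhdsWithin 0 (Set.Ioi 0)) ≤ H 0 := by
  have h1 : ∀ ε, 0 < ε → 0 ≤ limsup (u ε) atTop ∧ limsup (u ε) atTop ≤ H ε := by
    intro ε hε
    have hb : IsBoundedUnder (· ≤ ·) atTop (u ε) := ⟨H ε, by simpa using hu ε hε⟩
    have hb' : IsBoundedUnder (· ≥ ·) atTop (u ε) := ⟨0, by simpa using ⟨0, fun m _ => hu0 ε m⟩⟩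
    refine ⟨le_limsup_of_frequently_le (Eventually.of_forall (hu0 ε)).frequently hb, ?_⟩
    exact limsup_le_of_le hb'.isCoboundedUnder_le (hu ε hε)
  have ht : Tendsto H (nhdsWithin 0 (Set.Ioi 0)) (nhds (H 0)) := hH.mono_left nhdsWithin_le_nhds
  have ev : ∀ᶠ ε : ℝ in nhdsWithin 0 (Set.Ioi 0), 0 < ε := self_mem_nhdsWithin
  have ev0 : ∀ᶠ ε : ℝ in nhdsWithin 0 (Set.Ioi 0), 0 ≤ limsup (u ε) atTop :=
    ev.mono fun ε h => (h1 ε h).1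
  have evH : (fun ε => limsup (u ε) atTop) ≤ᶠ[nhdsWithin 0 (Set.Ioi 0)] H :=
    ev.mono fun ε h => (h1 ε h).2
  have hb : IsBoundedUnder (· ≤ ·) (nhdsWithin (0 : ℝ) (Set.Ioi 0))
      (fun ε => limsup (u ε) atTop) := ht.isBoundedUnder_le.mono_le evH
  have hb' : IsBoundedUnder (· ≥ ·) (nhdsWithin (0 : ℝ) (Set.Ioi 0))
      (fun ε => limsup (u ε) atTop) := ⟨0, by simpa using ev0⟩
  refine ⟨le_limsup_of_frequently_le ev0.frequently hb, ?_⟩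
  rw [← ht.limsup_eq]
  exact limsup_le_limsup evH hb'.isCoboundedUnder_le ht.isBoundedUnder_le

end Final

/-- **Theorem 3.1 (local ergodic theorem in equilibrium form).**
For every jump rate `c`, every `Γ`-invariant local function bundle `f` and every `C > 0`,
`lim_{i→∞} limsup_{ε→0} limsup_{m→∞} sup_{μ ∈ P_{m,C}}
  E_μ |f̄_{o,i} - ⟨f_o⟩(η̄_{o,b(ε√t_m)})| = 0`. -/
theorem local_ergodic_equilibrium
    {Γ : Type} [Group Γ] [DecidableEq Γ] [Infinite Γ]
    (S : Finset Γ) (hS_symm : ∀ s ∈ S, s⁻¹ ∈ S)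
    (hS_gen : Subgroup.closure (S : Set Γ) = ⊤)
    (Γs : ℕ → Subgroup Γ) [∀ m, (Γs m).Normal] [∀ m, (Γs m).FiniteIndex]
    [∀ m, Fintype (Γ ⧸ Γs m)] [∀ m, DecidableEq (Γ ⧸ Γs m)]
    (hdesc : ∀ m, Γs (m + 1) ≤ Γs m)
    (hsep : ∀ x : Γ, (∀ m, x ∈ Γs m) → x = 1)
    (t : ℕ → ℝ) (ht_pos : ∀ m, 0 < t m) (ht_mono : StrictMono t)
    (ht_top : Tendsto t atTop atTop)
    (ht_diam : ∀ m, Real.sqrt (t m) ≤ 2 * (diamQ (Γs m) S : ℝ))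
    (F : ℕ → Finset Γ) (hF : IsFolner S F)
    (c : JumpRate S) (f : LocalBundleV S) (C : ℝ) (hC : 0 < C) :
    Tendsto (fun i : ℕ =>
        limsup (fun ε : ℝ =>
            limsup (fun m : ℕ =>
                sSup {x : ℝ | ∃ μ : Conf (Γs m) → ℝ,
                  IsProb (Γs m) μ ∧ IsInvariant (Γs m) μ ∧
                    ImGen (Γs m) c μ ≤ C * ((Γs m).index : ℝ) / t m ∧
                    x = Emeas (Γs m) μ (fun η =>
                      |fbarQ (Γs m) f (F i) 1 η -
                        globalAvg f
                          (etabarQ (Γs m) (F (bFol S F (ε * Real.sqrt (t m)))) 1 η)|)})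
              atTop)
          (nhdsWithin 0 (Set.Ioi 0)))
      atTop (nhds 0) := by
  obtain ⟨a, ha1, ha2⟩ := bundle_coeff f
  set κ : ℝ := 2 * Real.sqrt (2 * C / c.c₀) with hκ
  have κ0 : 0 ≤ κ := by positivity
  let H : ℕ → ℝ → ℝ := fun i ε => ∑ U ∈ (ballF S f.r).powerset, |a U| *
        Real.sqrt (8 * U.card * (3 * (2 * ε * κ)) + 8 * (U.card : ℝ) ^ 2 * ε
          + (U.card : ℝ) ^ 2 / (F i).card)
  have hH0 : ∀ i ε, 0 ≤ H i ε := fun i ε =>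
    Finset.sum_nonneg fun U _ => mul_nonneg (abs_nonneg _) (Real.sqrt_nonneg _)
  have hHc : ∀ i, ContinuousAt (H i) 0 := fun i => by
    apply Continuous.continuousAt
    fun_prop
  have hlim : Tendsto (fun i => H i 0) atTop (nhds 0) := by
    have hcard := folner_card S hS_symm hS_gen F hF
    have : Tendsto (fun i => H i 0) atTop (nhds (∑ U ∈ (ballF S f.r).powerset, |a U| *
        Real.sqrt (8 * U.card * (3 * (2 * 0 * κ)) + 8 * (U.card : ℝ) ^ 2 * 0 + 0))) := by
      refine tendsto_finsetSum _ fun U _ => Tendsto.const_mul _ ?_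
      refine (Real.continuous_sqrt.tendsto _).comp (Tendsto.const_add _ ?_)
      exact hcard.const_div_atTop _
    simpa using this
  have hsqrt : Tendsto (fun m => Real.sqrt (t m)) atTop atTop :=
    Real.tendsto_sqrt_atTop.comp ht_top
  have main := fun i : ℕ => limsup_bound (fun ε m =>
      sSup {x : ℝ | ∃ μ : Conf (Γs m) → ℝ,
                  IsProb (Γs m) μ ∧ IsInvariant (Γs m) μ ∧
                    ImGen (Γs m) c μ ≤ C * ((Γs m).index : ℝ) / t m ∧
                    x = Emeas (Γs m) μ (fun η =>
                      |fbarQ (Γs m) f (F i) 1 η -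
                        globalAvg f
                          (etabarQ (Γs m) (F (bFol S F (ε * Real.sqrt (t m)))) 1 η)|)})
      (H i) (fun ε m => ?_) (fun ε hε => ?_) (hHc i)
  · exact squeeze_zero (fun i => (main i).1) (fun i => (main i).2) hlim
  · refine Real.sSup_nonneg ?_
    rintro x ⟨μ, hP, -, -, rfl⟩
    exact Finset.sum_nonneg fun η _ => mul_nonneg (hP.1 η) (abs_nonneg _)
  · have hK : Tendsto (fun m => ε * Real.sqrt (t m)) atTop atTop := hsqrt.const_mul_atTop hε
    obtain ⟨hb1, hb2⟩ := bFol_props S hS_symm hS_gen F hF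
    obtain ⟨J, hJ⟩ := fibre_small S hS_symm hS_gen F hF ε hε
    let W : Finset Γ := insert 1 (S ∪ ballF S c.r ∪ S * ballF S c.r)
    have evW : ∀ᶠ m in atTop, ∀ x ∈ F i * ballF S f.r,
        (wordNorm S x : ℝ) ≤ ε * Real.sqrt (t m) :=
      (Filter.eventually_all_finset _).2 fun x _ => hK.eventually_ge_atTop _
    filter_upwards [hK.eventually hb2, (hb1.comp hK).eventually hJ, evW,
      sep_inj Γs hdesc hsep J, sep_inj Γs hdesc hsep W,
      sep_inj Γs hdesc hsep (F i * ballF S f.r)] with m h1 h2 h3 h4 h5 h6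
    refine Real.sSup_le ?_ (hH0 i ε)
    rintro x ⟨μ, hP, hinv, hI, rfl⟩
    have hSep : SepRate (Γs m) c := by
      intro s z hz
      have hzW : z ∈ W := by
        simp only [Finset.mem_union, Finset.mem_image, one_mul] at hz
        simp only [W, Finset.mem_insert, Finset.mem_union]
        rcases hz with ⟨y, hy, rfl⟩ | ⟨y, hy, rfl⟩
        · exact Or.inr (Or.inl (Or.inr hy))
        · exact Or.inr (Or.inr (Finset.mul_mem_mul s.2 hy))
      refine ⟨h5 z hzW 1 (by simp [W]), h5 z hzW s ?_⟩
      simp only [W, Finset.mem_insert, Finset.mem_union]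
      exact Or.inr (Or.inl (Or.inl s.2))
    have hts : 0 < Real.sqrt (t m) := Real.sqrt_pos.2 (ht_pos m)
    have hedge := del_edge_bound (Γs m) c hSep μ hP hinv C (t m) (ht_pos m) hI
    have hball := del_ball (Γs m) S μ _ (by positivity) hedge
    have hd : ∀ x : Γ, (wordNorm S x : ℝ) ≤ ε * Real.sqrt (t m) →
        del μ (Equiv.swap (1 : Γ ⧸ Γs m) (QuotientGroup.mk x)) ≤ 2 * ε * κ := by
      intro x hx
      refine (hball _ x (mem_ball_wordNorm S hS_symm hS_gen x)).trans ?_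
      rw [← hκ]
      calc 2 * (wordNorm S x : ℝ) * (κ / Real.sqrt (t m))
          ≤ 2 * (ε * Real.sqrt (t m)) * (κ / Real.sqrt (t m)) := by gcongr
        _ = 2 * ε * κ := by field_simp
    refine quot_bound (Γs m) f a ha1 ha2 μ hP (F i) _ (hF.1 i) (hF.1 _) (2 * ε * κ) ε
      (by positivity) (fun τ hτ => hd τ (h1 τ hτ)) (fun τ hτ => hd τ (h3 τ hτ)) h6 ?_
    intro v
    refine h2 _ (Finset.filter_subset _ _) ?_
    intro g hg g' hg' p hp p' hp' e
    refine h4 g hg g' hg' ?_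
    have q := (Finset.mem_filter.1 hp).2
    have q' := (Finset.mem_filter.1 hp').2
    have e' := congrArg (QuotientGroup.mk (s := Γs m)) e
    rw [QuotientGroup.mk_mul, QuotientGroup.mk_mul, q, q'] at e'
    exact mul_left_cancel e'

end Tower
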